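/- arXiv:2312.08842 — 3 statements merged into one kernel-verified Lean document; each statement's English description precedes it below -/
import Mathlib

section
/- Let A(t) = ∑_{n≥0} A_n tⁿ be a formal power series with complex coefficients. There exists a formal power series u ∈ ℂ[[t]] with constant term u(0) = 1 satisfying the formal differential equation t·u″(t) − u′(t) + A(t)·u(t) = 0 if and only if A₀² + A₁ = 0. -/
open PowerSeries

/-- Coefficients of the Frobenius solution (division by zero makes the coefficient `u₂` zero). -/
noncomputable def frobSeq (A : PowerSeries ℂ) : ℕ → ℂ
  | 0 => 1
  | n + 1 => -(∑ j : Fin (n + 1), frobSeq A j.1 * coeff (n - j.1) A) / (((n : ℂ) + 1) * ((n : ℂ) - 1))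
decreasing_by exact j.2

lemma coeff_ode (A u : PowerSeries ℂ) (n : ℕ) :
    coeff n (X * derivative ℂ (derivative ℂ u) - derivative ℂ u + A * u)
      = ((n : ℂ) + 1) * ((n : ℂ) - 1) * coeff (n + 1) u
        + ∑ j ∈ Finset.range (n + 1), coeff j u * coeff (n - j) A := by
  rw [mul_comm A u, map_add, map_sub, coeff_mul n u A,
    Finset.Nat.sum_antidiagonal_eq_sum_range_succ (fun i j => coeff i u * coeff j A)]
  congr 1
  cases n with
  | zero => simp [coeff_derivative]
  | succ m =>
    rw [coeff_succ_X_mul]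
    simp only [coeff_derivative]
    push_cast
    ring

/-- Frobenius-series form of trivial monodromy for indicial exponents `3/2, -1/2`:
the formal ODE `t·u″ − u′ + A·u = 0` has a formal power series solution with `u(0) = 1`
iff `A₀² + A₁ = 0`. -/
theorem trivial_monodromy_three_quarters (A : PowerSeries ℂ) :
    (∃ u : PowerSeries ℂ, constantCoeff u = 1 ∧
        X * derivative ℂ (derivative ℂ u) - derivative ℂ u + A * u = 0)
      ↔ (coeff 0 A) ^ 2 + coeff 1 A = 0 := by
  constructor
  · rintro ⟨u, h0, h⟩
    have h0' : coeff 0 u = 1 := by simpa using h0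
    have e0 := coeff_ode A u 0
    have e1 := coeff_ode A u 1
    rw [h, map_zero] at e0 e1
    simp only [Finset.sum_range_succ, Finset.sum_range_zero, h0'] at e0 e1
    norm_num at e0 e1
    simp only [coeff_zero_eq_constantCoeff] at *
    linear_combination (-1 : ℂ) * e1 - constantCoeff A * e0
  · intro hA
    have s0 : frobSeq A 0 = 1 := by rw [frobSeq]
    have hs : ∀ n, frobSeq A (n + 1) =
        -(∑ j ∈ Finset.range (n + 1), frobSeq A j * coeff (n - j) A)
          / (((n : ℂ) + 1) * ((n : ℂ) - 1)) := by
      intro n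
      rw [frobSeq, Finset.sum_range (fun j => frobSeq A j * coeff (n - j) A)]
    refine ⟨PowerSeries.mk (frobSeq A), ?_, ?_⟩
    · rw [← coeff_zero_eq_constantCoeff_apply, coeff_mk, s0]
    · ext n
      rw [coeff_ode, map_zero]
      simp only [coeff_mk]
      by_cases hn : n = 1
      · subst hn
        have s1 : frobSeq A 1 = coeff 0 A := by
          rw [hs 0]; simp [s0]
        simp only [Finset.sum_range_succ, Finset.sum_range_zero, s0, s1]
        norm_num
        simp only [coeff_zero_eq_constantCoeff] at *
        linear_combination hA
      · have h1 : (n : ℂ) + 1 ≠ 0 := by exact_mod_cast Nat.succ_ne_zero n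
        have h2 : (n : ℂ) - 1 ≠ 0 := by
          rw [sub_ne_zero]; exact_mod_cast hn
        rw [hs n, mul_div_cancel₀ _ (mul_ne_zero h1 h2)]
        ring
end

section
/- Let A(t) = ∑_{n≥0} A_n tⁿ be a formal power series with complex coefficients. There exists a formal power series u ∈ ℂ[[t]] with constant term u(0) = 1 satisfying the formal differential equation t·u″(t) − 2·u′(t) + A(t)·u(t) = 0 if and only if A₀³ + 4·A₀·A₁ + 4·A₂ = 0. -/
open PowerSeries

/-- Recursive coefficients of the Frobenius solution. -/
noncomputable def frobCoeff (a : ℕ → ℂ) : ℕ → ℂ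
  | 0 => 1
  | n + 1 => -(∑ i : Fin (n + 1), frobCoeff a i.1 * a (n - i.1)) / (((n : ℂ) + 1) * ((n : ℂ) - 2))
decreasing_by exact i.2

theorem frob_coeff_eq (A u : PowerSeries ℂ) (n : ℕ) :
    coeff n (X * derivative ℂ (derivative ℂ u) - 2 * derivative ℂ u + A * u)
      = ((n : ℂ) + 1) * ((n : ℂ) - 2) * coeff (n + 1) u
        + ∑ i ∈ Finset.range (n + 1), coeff i u * coeff (n - i) A := by
  have h2 : (2 : PowerSeries ℂ) = C (2 : ℂ) := (map_ofNat (C (R := ℂ)) 2).symm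
  rw [mul_comm A u, map_add, map_sub, coeff_mul n u A,
    Finset.Nat.sum_antidiagonal_eq_sum_range_succ (fun i j => coeff i u * coeff j A), h2,
    coeff_C_mul, coeff_derivative]
  congr 1
  cases n with
  | zero => simp
  | succ m =>
    rw [coeff_succ_X_mul, coeff_derivative, coeff_derivative]
    push_cast
    ring

/-- Frobenius-series form of trivial monodromy for indicial exponents `2, -1`:
the formal ODE `t·u″ − 2u′ + A·u = 0` has a formal power series solution with `u(0) = 1`
iff `A₀³ + 4A₀A₁ + 4A₂ = 0`. -/
theorem trivial_monodromy_two (A : PowerSeries ℂ) :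
    (∃ u : PowerSeries ℂ, constantCoeff u = 1 ∧
        X * derivative ℂ (derivative ℂ u) - 2 * derivative ℂ u + A * u = 0)
      ↔ (coeff 0 A) ^ 3 + 4 * coeff 0 A * coeff 1 A + 4 * coeff 2 A = 0 := by
  constructor
  · rintro ⟨u, hu, h⟩
    have key := fun n => (frob_coeff_eq A u n).symm.trans (by rw [h, map_zero])
    rw [← coeff_zero_eq_constantCoeff_apply] at hu
    have h0 := key 0
    have h1 := key 1
    have h2 := key 2
    simp only [Finset.sum_range_succ, Finset.sum_range_zero, hu] at h0 h1 h2
    norm_num at h0 h1 h2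
    simp only [← coeff_zero_eq_constantCoeff_apply, hu] at *
    generalize coeff 0 A = a at *
    generalize coeff 1 A = b at *
    generalize coeff 2 A = c at *
    generalize coeff 1 u = v at *
    generalize coeff 2 u = w at *
    linear_combination 4 * h2 + 2 * a * h1 + (a ^ 2 + 2 * b) * h0
  · intro h
    set f := frobCoeff (fun n => coeff n A) with hf
    have f0 : f 0 = 1 := by rw [hf, frobCoeff]
    have fs : ∀ n, f (n + 1) = -(∑ i ∈ Finset.range (n + 1), f i * coeff (n - i) A)
        / (((n : ℂ) + 1) * ((n : ℂ) - 2)) := by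
      intro n
      rw [hf, frobCoeff, Finset.sum_range]
    refine ⟨PowerSeries.mk f, ?_, ?_⟩
    · rw [← coeff_zero_eq_constantCoeff_apply, coeff_mk, f0]
    · ext n
      rw [frob_coeff_eq, map_zero]
      simp only [coeff_mk]
      by_cases hn : n = 2
      · subst hn
        have f1 := fs 0
        have f2 := fs 1
        simp only [Finset.sum_range_succ, Finset.sum_range_zero, f0] at f1 f2 ⊢
        norm_num at f1 f2 h ⊢
        rw [f2, f1]
        linear_combination h / 4
      · have e1 : (n : ℂ) + 1 ≠ 0 := by exact_mod_cast n.succ_ne_zero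
        have e2 : (n : ℂ) - 2 ≠ 0 := sub_ne_zero.mpr (by exact_mod_cast hn)
        rw [fs n, mul_div_cancel₀ _ (mul_ne_zero e1 e2)]
        ring
end

section
/- Let k, l, α ∈ ℂ and j ∈ ℂ, and assume that ((k+2)h + α + j − l − 1)·((k+2)h + α + j + l) ≠ 0 for every integer h ≥ 0. Then the linear operator A_{α,j} : ℂ[[ξ]] → ℂ[[ξ]], A_{α,j} g = D(D g) + (2α+2j−1)·D g + (α+j−l−1)(α+j+l)·g + ξ·g, where D g = (k+2)·ξ·g′, is a bijection: for every b ∈ ℂ[[ξ]] there is a unique g ∈ ℂ[[ξ]] with A_{α,j} g = b. -/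
open PowerSeries

/-- If the indicial polynomial `R_j(h;α) = ((k+2)h+α+j−l−1)((k+2)h+α+j+l)` never vanishes
for `h ∈ ℤ_{≥0}`, then the operator
`A_{α,j} g = D(Dg) + (2α+2j−1)Dg + (α+j−l−1)(α+j+l)g + ξg`, with `D g = (k+2)·ξ·g′`,
is a bijection on formal power series: every `b` has a unique preimage. -/
theorem frobenius_operator_bijective (k l α j : ℂ)
    (hR : ∀ h : ℕ, ((k + 2) * (h : ℂ) + α + j - l - 1)
      * ((k + 2) * (h : ℂ) + α + j + l) ≠ 0)
    (D : PowerSeries ℂ → PowerSeries ℂ)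
    (hD : ∀ g, D g = C (k + 2) * (X * derivative ℂ g))
    (A : PowerSeries ℂ → PowerSeries ℂ)
    (hA : ∀ g, A g = D (D g) + C (2 * α + 2 * j - 1) * D g
      + C ((α + j - l - 1) * (α + j + l)) * g + X * g) :
    ∀ b : PowerSeries ℂ, ∃! g : PowerSeries ℂ, A g = b := by
  have cD : ∀ g n, coeff n (D g) = (k + 2) * (n : ℂ) * coeff n g := by
    intro g n
    rw [hD, coeff_C_mul]
    cases n with
    | zero => simp
    | succ n =>
      rw [coeff_succ_X_mul, coeff_derivative]
      push_cast
      ring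
  have c0 : ∀ g, coeff 0 (A g) = (((k + 2) * ((0 : ℕ) : ℂ) + α + j - l - 1)
      * ((k + 2) * ((0 : ℕ) : ℂ) + α + j + l)) * coeff 0 g := by
    intro g
    rw [hA, map_add, map_add, map_add, coeff_C_mul, coeff_C_mul, cD, cD, coeff_zero_X_mul]
    push_cast
    ring
  have cS : ∀ g (n : ℕ), coeff (n + 1) (A g) = (((k + 2) * ((n + 1 : ℕ) : ℂ) + α + j - l - 1)
      * ((k + 2) * ((n + 1 : ℕ) : ℂ) + α + j + l)) * coeff (n + 1) g + coeff n g := by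
    intro g n
    rw [hA, map_add, map_add, map_add, coeff_C_mul, coeff_C_mul, cD, cD, coeff_succ_X_mul]
    ring
  intro b
  generalize hr : (fun h : ℕ => ((k + 2) * (h : ℂ) + α + j - l - 1)
      * ((k + 2) * (h : ℂ) + α + j + l)) = R at *
  have hR' : ∀ h, R h ≠ 0 := by intro h; rw [← hr]; exact hR h
  have c0' : ∀ g, coeff 0 (A g) = R 0 * coeff 0 g := by intro g; rw [← hr]; exact c0 g
  have cS' : ∀ g (n : ℕ), coeff (n + 1) (A g) = R (n + 1) * coeff (n + 1) g + coeff n g := by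
    intro g n; rw [← hr]; exact cS g n
  let f : ℕ → ℂ := fun n => Nat.rec (coeff 0 b / R 0)
    (fun n x => (coeff (n + 1) b - x) / R (n + 1)) n
  have f0 : f 0 = coeff 0 b / R 0 := rfl
  have fS : ∀ n, f (n + 1) = (coeff (n + 1) b - f n) / R (n + 1) := fun _ => rfl
  refine ⟨PowerSeries.mk f, ?_, ?_⟩
  · ext n
    cases n with
    | zero => rw [c0', coeff_mk, f0, mul_div_cancel₀ _ (hR' 0)]
    | succ n =>
      rw [cS', coeff_mk, coeff_mk, fS, mul_div_cancel₀ _ (hR' _)]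
      ring
  · rintro g rfl
    ext n
    rw [coeff_mk]
    induction n with
    | zero => rw [f0, c0', mul_div_cancel_left₀ _ (hR' 0)]
    | succ n ih =>
      rw [fS, cS', ih, add_sub_cancel_right, mul_div_cancel_left₀ _ (hR' _)]
end
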